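/- arXiv:1502.03574 — 2 statements merged into one kernel-verified Lean document; each statement's English description precedes it below -/
import Mathlib

section
/- Let h : ℝ → [0,∞) be integrable and suppose there is a constant C > 0 such that ∫_{-∞}^{-z} h(y) dy + ∫_{z}^{∞} h(y) dy ≤ C/z for every z > 0. Set κ = min( ∫₀^{∞} h(y) dy , ∫_{-∞}^{0} h(y) dy ) and G(x) = ∫₀ˣ h(y) dy (a signed integral, so G(x) < 0 for x < 0). Then for every x ∈ ℝ one has x·G(x) ≥ κ|x| − C. -/
/-!
By the symmetry `x ↦ -x`, consider `x > 0`. Then `G x = ∫_0^∞ h - ∫_x^∞ h`, where the first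
integral is at least `κ` and, since `h ≥ 0`, the second is at most the full two-sided tail,
hence at most `C / x`. Multiplying by `x` gives the bound; at `x = 0` it reads `-C ≤ 0`.
-/

open MeasureTheory Real

/-- Pointwise coercivity bound behind the Corollary to Proposition 3.1.
If `h ≥ 0` is integrable with tails `∫_{-∞}^{-z} h + ∫_z^∞ h ≤ C/z` for `z > 0`,
`κ = min(∫₀^∞ h, ∫_{-∞}^0 h)` and `G x = ∫₀ˣ h` (signed), then
`x · G(x) ≥ κ|x| − C` for every `x`. -/
theorem stmt_2 (h : ℝ → ℝ) (hpos : ∀ y, 0 ≤ h y) (hint : Integrable h)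
    (C : ℝ) (hC : 0 < C)
    (htail : ∀ z : ℝ, 0 < z →
      (∫ y in Set.Iic (-z), h y) + (∫ y in Set.Ici z, h y) ≤ C / z)
    (κ : ℝ) (hκ : κ = min (∫ y in Set.Ici (0:ℝ), h y) (∫ y in Set.Iic (0:ℝ), h y))
    (G : ℝ → ℝ) (hG : ∀ x, G x = ∫ y in (0:ℝ)..x, h y) :
    ∀ x : ℝ, κ * |x| - C ≤ x * G x := by
  have hI : ∀ s, IntegrableOn h s := fun s => hint.integrableOn
  have hnn : ∀ s, 0 ≤ ∫ y in s, h y := fun s => integral_nonneg hpos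
  intro x
  rcases lt_trichotomy x 0 with hx | rfl | hx
  · -- `G x = ∫_{-∞}^x h - ∫_{-∞}^0 h`, and the first integral is at most `C / |x|`.
    have hsplit := intervalIntegral.integral_Iic_sub_Iic (hI (Set.Iic 0)) (hI (Set.Iic x))
    have ht := htail (-x) (by linarith)
    rw [le_div_iff₀ (by linarith), neg_neg] at ht
    have hk : κ ≤ ∫ y in Set.Iic (0:ℝ), h y := hκ ▸ min_le_right _ _
    rw [hG, abs_of_neg hx, ← hsplit]
    nlinarith [hnn (Set.Ici (-x))]
  · simpa using hC.le
  · -- `G x = ∫_0^∞ h - ∫_x^∞ h`, and the second integral is at most `C / x`.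
    have hsplit := intervalIntegral.integral_Ioi_sub_Ioi (hI (Set.Ioi 0)) hx.le
    have ht := htail x hx
    rw [le_div_iff₀ hx, integral_Ici_eq_integral_Ioi] at ht
    have hk : κ ≤ ∫ y in Set.Ioi (0:ℝ), h y := by
      rw [← integral_Ici_eq_integral_Ioi]
      exact hκ ▸ min_le_left _ _
    rw [hG, abs_of_pos hx, ← hsplit]
    nlinarith [hnn (Set.Iic (-x))]
end

section
/- Let h : ℝ → [0,∞) be integrable, C > 0 with ∫_{-∞}^{-z} h(y) dy + ∫_{z}^{∞} h(y) dy ≤ C/z for every z > 0, and suppose κ = min( ∫₀^{∞} h(y) dy , ∫_{-∞}^{0} h(y) dy ) > 0. Set G(x) = ∫₀ˣ h(y) dy. Then for every ε > 0 and every 2π-periodic C¹ function f : ℝ → ℝ one has ∫₀^{2π} |f'(x)| dx ≤ (ε/κ)·( ∫₀^{2π} (f'(x)/ε) G(f'(x)/ε) dx + 2πC ). -/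
open MeasureTheory Real

/-!
The estimate is the integral over a period of the pointwise bound `κ |v| ≤ v G(v) + C`
(`kappa_mul_abs_le`), taken at `v = f'(x) / ε`. For `v > 0`, `G(v)` is the full right half-line
mass of `h`, at least `κ`, minus the tail beyond `v`, at most `C / v`; for `v < 0` the same
holds for `-G(v)` and the left half-line. Integrating needs only that `f'` and `G` are continuous.
-/

lemma kappa_mul_abs_le {h : ℝ → ℝ} (hpos : ∀ y, 0 ≤ h y) (hint : Integrable h)
    {C : ℝ} (hC : 0 < C)
    (htail : ∀ z : ℝ, 0 < z →
      (∫ y in Set.Iic (-z), h y) + (∫ y in Set.Ici z, h y) ≤ C / z)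
    {κ : ℝ} (hright : κ ≤ ∫ y in Set.Ici (0:ℝ), h y) (hleft : κ ≤ ∫ y in Set.Iic (0:ℝ), h y)
    (v : ℝ) : κ * |v| ≤ v * (∫ y in (0:ℝ)..v, h y) + C := by
  have hIic (a : ℝ) : 0 ≤ ∫ y in Set.Iic a, h y := integral_nonneg hpos
  have hIci (a : ℝ) : 0 ≤ ∫ y in Set.Ici a, h y := integral_nonneg hpos
  rcases lt_trichotomy v 0 with hv | rfl | hv
  · have e := intervalIntegral.integral_Iic_sub_Iic (μ := volume)
      (hint.integrableOn (s := Set.Iic 0)) (hint.integrableOn (s := Set.Iic v))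
    have t := htail (-v) (by linarith)
    rw [neg_neg, le_div_iff₀ (by linarith)] at t
    rw [← e, abs_of_neg hv]
    nlinarith [mul_nonneg (neg_pos.2 hv).le (hIci (-v)),
      mul_le_mul_of_nonneg_right hleft (neg_pos.2 hv).le]
  · simp [hC.le]
  · have e := intervalIntegral.integral_interval_add_Ioi (μ := volume) (a := 0) (b := v)
      (hint.integrableOn (s := Set.Ioi 0)) (hint.integrableOn (s := Set.Ioi v))
    rw [← integral_Ici_eq_integral_Ioi, ← integral_Ici_eq_integral_Ioi] at e
    have t := htail v hv
    rw [le_div_iff₀ hv] at t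
    rw [eq_sub_of_add_eq e, abs_of_pos hv]
    nlinarith [mul_nonneg hv.le (hIic (-v)), mul_le_mul_of_nonneg_right hright hv.le]

/-- The deterministic estimate underlying the uniform bound
`∫₀ᵗ E|ψₓ^{m,ε}|_{L¹} ds ≤ Cε/κ` of the Corollary to Proposition 3.1.
Under the tail condition on `h` and `κ > 0`, for every `ε > 0` and
`2π`-periodic C¹ function `f`:
`∫₀^{2π} |f'| dx ≤ (ε/κ)( ∫₀^{2π} (f'/ε) G(f'/ε) dx + 2πC )`. -/
theorem stmt_3 (h : ℝ → ℝ) (hpos : ∀ y, 0 ≤ h y) (hint : Integrable h)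
    (C : ℝ) (hC : 0 < C)
    (htail : ∀ z : ℝ, 0 < z →
      (∫ y in Set.Iic (-z), h y) + (∫ y in Set.Ici z, h y) ≤ C / z)
    (κ : ℝ) (hκ : κ = min (∫ y in Set.Ici (0:ℝ), h y) (∫ y in Set.Iic (0:ℝ), h y))
    (hκpos : 0 < κ)
    (G : ℝ → ℝ) (hG : ∀ x, G x = ∫ y in (0:ℝ)..x, h y)
    (ε : ℝ) (hε : 0 < ε)
    (f : ℝ → ℝ) (hf : ContDiff ℝ 1 f) (hfper : Function.Periodic f (2 * Real.pi)) :
    (∫ x in (0:ℝ)..(2 * Real.pi), |deriv f x|)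
      ≤ (ε / κ) *
        ((∫ x in (0:ℝ)..(2 * Real.pi), (deriv f x / ε) * G (deriv f x / ε))
          + 2 * Real.pi * C) := by
  have hGc : Continuous G := by
    rw [funext hG]
    exact intervalIntegral.continuous_primitive (fun a b => hint.intervalIntegrable) 0
  have hd : Continuous (deriv f) := hf.continuous_deriv le_rfl
  have hvG : Continuous fun x => (deriv f x / ε) * G (deriv f x / ε) := by fun_prop
  have pointwise (x : ℝ) :
      |deriv f x| ≤ (ε / κ) * ((deriv f x / ε) * G (deriv f x / ε) + C) := by
    have key := kappa_mul_abs_le hpos hint hC htail (hκ ▸ min_le_left _ _)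
      (hκ ▸ min_le_right _ _) (deriv f x / ε)
    rw [← hG, abs_div, abs_of_pos hε] at key
    calc |deriv f x| = (ε / κ) * (κ * (|deriv f x| / ε)) := by field_simp
      _ ≤ _ := by gcongr
  calc (∫ x in (0:ℝ)..(2 * Real.pi), |deriv f x|)
      ≤ ∫ x in (0:ℝ)..(2 * Real.pi),
          (ε / κ) * ((deriv f x / ε) * G (deriv f x / ε) + C) :=
        intervalIntegral.integral_mono_on (by positivity) (hd.abs.intervalIntegrable _ _)
          ((continuous_const.mul (hvG.add continuous_const)).intervalIntegrable _ _)
          fun x _ => pointwise x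
    _ = _ := by
        rw [intervalIntegral.integral_const_mul, intervalIntegral.integral_add
          (hvG.intervalIntegrable _ _) intervalIntegrable_const,
          intervalIntegral.integral_const, smul_eq_mul, sub_zero]
end
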